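/- arXiv:2012.08942 — 2 statements merged into one kernel-verified Lean document; each statement's English description precedes it below -/
import Mathlib

section
/- Let H and K be separable complex Hilbert spaces, (Λ, μ) a σ-finite measure space, and T : H → L²(Λ, μ; K) a continuous linear map with dense range. Suppose T is pointwise defined, i.e. there is a family (T_λ)_{λ∈Λ} of continuous linear maps T_λ : H → K such that for every v ∈ H one has (T v)(λ) = T_λ(v) for μ-almost every λ ∈ Λ. Then for μ-almost every λ ∈ Λ the map T_λ : H → K has dense range. -/
open MeasureTheory

/-!
A sequence converging in `Lᵖ` has a subsequence converging almost everywhere. Approximating the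
function that equals `c` on a set of finite measure and vanishes elsewhere by elements of the range
of `T` thus shows that, for each fixed `c`, almost every fiber map has `c` in the closure of its
range. Letting `c` run through a countable dense set makes the exceptional null set independent
of `c`.
-/

section PointwiseDefined

variable {Λ E V : Type*} [MeasurableSpace Λ] {μ : Measure Λ} [NormedAddCommGroup E]
  {p : ENNReal} [Fact (1 ≤ p)] {T : V → Lp E p μ} {Tfib : Λ → V → E}

theorem ae_mem_closure_range_fiber_of_mem_closure_range
    (hpt : ∀ v, ∀ᵐ l ∂μ, T v l = Tfib l v) {g : Lp E p μ} (hg : g ∈ closure (Set.range T)) :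
    ∀ᵐ l ∂μ, g l ∈ closure (Set.range (Tfib l)) := by
  obtain ⟨u, hu, hu_lim⟩ := mem_closure_iff_seq_limit.1 hg
  choose v hv using hu
  obtain rfl : (fun n => T (v n)) = u := funext hv
  obtain ⟨ns, -, hns⟩ := (tendstoInMeasure_of_tendsto_Lp hu_lim).exists_seq_tendsto_ae
  filter_upwards [hns, ae_all_iff.2 fun n => hpt (v n)] with l hl_lim hl_fib
  refine mem_closure_of_tendsto hl_lim (Filter.Eventually.of_forall fun n => ?_)
  exact ⟨v (ns n), (hl_fib (ns n)).symm⟩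

theorem ae_mem_closure_range_fiber_of_denseRange [SigmaFinite μ]
    (hT : DenseRange T) (hpt : ∀ v, ∀ᵐ l ∂μ, T v l = Tfib l v) (c : E) :
    ∀ᵐ l ∂μ, c ∈ closure (Set.range (Tfib l)) := by
  refine ae_of_forall_measure_lt_top_ae_restrict _ fun s hs hμs => ?_
  have h_mem := ae_mem_closure_range_fiber_of_mem_closure_range hpt
    (hT (indicatorConstLp p hs hμs.ne c))
  rw [ae_restrict_iff' hs]
  filter_upwards [h_mem, indicatorConstLp_coeFn_mem (p := p) (hs := hs) (hμs := hμs.ne) (c := c)]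
    with l hl h_eq hls
  rwa [h_eq hls] at hl

theorem denseRange_fiber_of_denseRange_pointwiseDefined_general
    [TopologicalSpace.SeparableSpace E] [SigmaFinite μ]
    (hT : DenseRange T) (hpt : ∀ v, ∀ᵐ l ∂μ, T v l = Tfib l v) :
    ∀ᵐ l ∂μ, DenseRange (Tfib l) := by
  obtain ⟨D, hD_countable, hD_dense⟩ := TopologicalSpace.exists_countable_dense E
  have hD_mem : ∀ᵐ l ∂μ, ∀ c ∈ D, c ∈ closure (Set.range (Tfib l)) :=
    (ae_ball_iff hD_countable).2 fun c _ => ae_mem_closure_range_fiber_of_denseRange hT hpt c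
  filter_upwards [hD_mem] with l hl
  exact dense_closure.1 (hD_dense.mono hl)

end PointwiseDefined

/-- **Lemma 2(1)** (constant-fiber form of Bernstein, Lemma 1.3):
If a pointwise defined continuous linear map `T : H → L²(Λ, μ; K)` has dense range,
then μ-almost every fiber map `T_λ : H → K` has dense range. -/
theorem denseRange_fiber_of_denseRange_pointwiseDefined
    {H : Type*} [NormedAddCommGroup H] [InnerProductSpace ℂ H] [CompleteSpace H]
    [TopologicalSpace.SeparableSpace H]
    {K : Type*} [NormedAddCommGroup K] [InnerProductSpace ℂ K] [CompleteSpace K]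
    [TopologicalSpace.SeparableSpace K]
    {Λ : Type*} [MeasurableSpace Λ] {μ : Measure Λ} [SigmaFinite μ]
    (T : H →L[ℂ] Lp K 2 μ) (hT : DenseRange T)
    (Tfib : Λ → (H →L[ℂ] K))
    (hpt : ∀ v : H, ∀ᵐ l ∂μ, (T v : Λ → K) l = Tfib l v) :
    ∀ᵐ l ∂μ, DenseRange (Tfib l) :=
  denseRange_fiber_of_denseRange_pointwiseDefined_general hT hpt
end

section
/- Let H and K be separable complex Hilbert spaces, (Λ, μ) a σ-finite measure space, and T : H → L²(Λ, μ; K) a continuous linear map that is Hilbert–Schmidt, i.e. there exists a Hilbert basis (e_i)_{i∈I} of H with Σ_{i∈I} ‖T e_i‖² < ∞. Then T is pointwise defined: there exists a family (T_λ)_{λ∈Λ} of continuous linear maps T_λ : H → K such that for every v ∈ H, (T v)(λ) = T_λ(v) for μ-almost every λ ∈ Λ. -/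
open MeasureTheory

/-!
Expanding `v` in the basis gives `T = ∑ᵢ ⟪eᵢ, ·⟫ T eᵢ`, so the fibers should be
`T_λ = ∑ᵢ ⟪eᵢ, ·⟫ (T eᵢ)(λ)`. By Bessel and Cauchy–Schwarz this series converges in operator norm
whenever `∑ᵢ ‖(T eᵢ)(λ)‖² < ∞`. That holds for almost every `λ`: the functions `‖(T eᵢ)(·)‖²`
have `L^(p/2)` norms `‖T eᵢ‖²`, which are summable, and the triangle inequality in `L^(p/2)`
applies as soon as `p ≥ 2`.
-/

open InnerProductSpace (rankOne)
open scoped ENNReal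

section RankOneSeries

variable {𝕜 : Type*} [RCLike 𝕜] {H : Type*} [NormedAddCommGroup H] [InnerProductSpace 𝕜 H]
  {ι : Type*} {e : ι → H} {F : Type*} [NormedAddCommGroup F] [NormedSpace 𝕜 F]

theorem norm_sum_rankOne_le_sqrt_sum_norm_sq (he : Orthonormal 𝕜 e) (a : ι → F) (s : Finset ι) :
    ‖∑ i ∈ s, rankOne 𝕜 (a i) (e i)‖ ≤ √(∑ i ∈ s, ‖a i‖ ^ 2) := by
  refine ContinuousLinearMap.opNorm_le_bound _ (Real.sqrt_nonneg _) fun v => ?_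
  have bessel : √(∑ i ∈ s, ‖inner 𝕜 (e i) v‖ ^ 2) ≤ ‖v‖ :=
    (Real.sqrt_le_left (norm_nonneg v)).2 (he.sum_inner_products_le v)
  calc ‖(∑ i ∈ s, rankOne 𝕜 (a i) (e i)) v‖
      = ‖∑ i ∈ s, inner 𝕜 (e i) v • a i‖ := by simp
    _ ≤ ∑ i ∈ s, ‖inner 𝕜 (e i) v‖ * ‖a i‖ := norm_sum_le_of_le s fun _ _ => norm_smul_le _ _
    _ ≤ √(∑ i ∈ s, ‖inner 𝕜 (e i) v‖ ^ 2) * √(∑ i ∈ s, ‖a i‖ ^ 2) :=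
      Real.sum_mul_le_sqrt_mul_sqrt s _ _
    _ ≤ ‖v‖ * √(∑ i ∈ s, ‖a i‖ ^ 2) := by gcongr
    _ = √(∑ i ∈ s, ‖a i‖ ^ 2) * ‖v‖ := mul_comm _ _

theorem summable_rankOne_of_summable_norm_sq [CompleteSpace F] (he : Orthonormal 𝕜 e) {a : ι → F}
    (ha : Summable fun i => ‖a i‖ ^ 2) : Summable fun i => rankOne 𝕜 (a i) (e i) := by
  refine summable_iff_vanishing_norm.2 fun ε hε => ?_
  obtain ⟨s, hs⟩ := summable_iff_vanishing_norm.1 ha (ε ^ 2) (by positivity)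
  refine ⟨s, fun t hts => (norm_sum_rankOne_le_sqrt_sum_norm_sq he a t).trans_lt ?_⟩
  exact (Real.sqrt_lt' hε).2 ((le_abs_self _).trans_lt (hs t hts))

theorem summable_norm_inner_smul_of_summable_norm_sq (he : Orthonormal 𝕜 e) {a : ι → F}
    (ha : Summable fun i => ‖a i‖ ^ 2) (v : H) : Summable fun i => ‖inner 𝕜 (e i) v • a i‖ := by
  simp only [norm_smul]
  exact Real.summable_mul_of_Lp_Lq_of_nonneg .two_two (fun _ => norm_nonneg _)
    (fun _ => norm_nonneg _) (mod_cast he.inner_products_summable v) (mod_cast ha)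

theorem hasSum_rankOne_of_summable_norm_sq [CompleteSpace F] (e : HilbertBasis ι 𝕜 H)
    (T : H →L[𝕜] F) (hT : Summable fun i => ‖T (e i)‖ ^ 2) :
    HasSum (fun i => rankOne 𝕜 (T (e i)) (e i)) T := by
  have hsum := (summable_rankOne_of_summable_norm_sq e.orthonormal hT).hasSum
  have tsum_eq : ∑' i, rankOne 𝕜 (T (e i)) (e i) = T := by
    ext v
    have expansion : HasSum (fun i => rankOne 𝕜 (T (e i)) (e i) v) (T v) := by
      simpa [e.repr_apply_apply] using (e.hasSum_repr v).mapL T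
    exact (hsum.mapL (ContinuousLinearMap.apply 𝕜 F v)).unique expansion
  rwa [tsum_eq] at hsum

end RankOneSeries

section AlmostEverywhere

variable {Λ : Type*} [MeasurableSpace Λ] {μ : Measure Λ} {ι : Type*} [Countable ι]
  {K : Type*} [NormedAddCommGroup K] {p : ℝ≥0∞}

theorem ae_summable_norm_rpow_of_tsum_eLpNorm_rpow_ne_top {r : ℝ} (hr : 0 < r)
    (hrp : ENNReal.ofReal r ≤ p) {f : ι → Λ → K} (hf : ∀ i, AEStronglyMeasurable (f i) μ)
    (hsum : ∑' i, eLpNorm (f i) p μ ^ r ≠ ∞) : ∀ᵐ l ∂μ, Summable fun i => ‖f i l‖ ^ r := by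
  have hr₀ : ENNReal.ofReal r ≠ 0 := (ENNReal.ofReal_pos.2 hr).ne'
  have one_le : 1 ≤ p / ENNReal.ofReal r :=
    (ENNReal.le_div_iff_mul_le (.inl hr₀) (.inl ENNReal.ofReal_ne_top)).2 (by simpa using hrp)
  have eLpNorm_eq (i : ι) :
      eLpNorm (fun l => ‖f i l‖ ^ r) (p / ENNReal.ofReal r) μ = eLpNorm (f i) p μ ^ r := by
    rw [eLpNorm_norm_rpow (f i) hr, ENNReal.div_mul_cancel hr₀ ENNReal.ofReal_ne_top]
  have meas (i : ι) : AEStronglyMeasurable (fun l => ‖f i l‖ ^ r) μ :=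
    ((hf i).norm.aemeasurable.pow_const r).aestronglyMeasurable
  filter_upwards [summable_norm_of_tsum_eLpNorm_ne_top one_le meas (by simpa only [eLpNorm_eq])]
    with l hl using hl.of_norm

theorem ae_summable_norm_sq_of_summable_norm_sq (hp : 2 ≤ p) {f : ι → Lp K p μ}
    (hf : Summable fun i => ‖f i‖ ^ 2) : ∀ᵐ l ∂μ, Summable fun i => ‖f i l‖ ^ 2 := by
  have : Fact (1 ≤ p) := ⟨one_le_two.trans hp⟩
  have hsum : ∑' i, eLpNorm (f i) p μ ^ (2 : ℝ) ≠ ∞ := by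
    simpa [← Lp.enorm_def, enorm_pow] using tsum_enorm_ne_top_iff_summable_norm.2 hf.norm
  simpa using ae_summable_norm_rpow_of_tsum_eLpNorm_rpow_ne_top two_pos (by simpa using hp)
    (fun i => Lp.aestronglyMeasurable (f i)) hsum

variable {𝕜 : Type*} [RCLike 𝕜] {H : Type*} [NormedAddCommGroup H] [InnerProductSpace 𝕜 H]
  [NormedSpace 𝕜 K] [CompleteSpace K] [Fact (1 ≤ p)]

theorem ae_tsum_rankOne_apply_eq (hp : 2 ≤ p) {e : ι → H} (he : Orthonormal 𝕜 e)
    {f : ι → Lp K p μ} (hf : Summable fun i => ‖f i‖ ^ 2) (v : H) :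
    ∀ᵐ l ∂μ, (∑' i, rankOne 𝕜 (f i) (e i)) v l = (∑' i, rankOne 𝕜 (f i l) (e i)) v := by
  have apply_eq : (∑' i, rankOne 𝕜 (f i) (e i)) v = ∑' i, inner 𝕜 (e i) v • f i :=
    (ContinuousLinearMap.apply 𝕜 _ v).map_tsum (summable_rankOne_of_summable_norm_sq he hf)
  have ae_hasSum : ∀ᵐ l ∂μ, HasSum (fun i => (inner 𝕜 (e i) v • f i) l)
      ((∑' i, inner 𝕜 (e i) v • f i : Lp K p μ) l) :=
    Lp.hasSum_coeFn_tsum <| tsum_enorm_ne_top_iff_summable_norm.2 <|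
      summable_norm_inner_smul_of_summable_norm_sq he hf v
  have ae_smul : ∀ᵐ l ∂μ, ∀ i, (inner 𝕜 (e i) v • f i) l = inner 𝕜 (e i) v • f i l :=
    ae_all_iff.2 fun i => Lp.coeFn_smul (inner 𝕜 (e i) v) (f i)
  filter_upwards [ae_summable_norm_sq_of_summable_norm_sq hp hf, ae_hasSum, ae_smul]
    with l hl hsum hsmul
  have fiber_hasSum := (summable_rankOne_of_summable_norm_sq he hl).hasSum.mapL
    (ContinuousLinearMap.apply 𝕜 K v)
  simp only [hsmul] at hsum
  rw [apply_eq]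
  exact hsum.unique fiber_hasSum

end AlmostEverywhere

theorem pointwiseDefined_of_hilbertSchmidt_general
    {𝕜 : Type*} [RCLike 𝕜] {H : Type*} [NormedAddCommGroup H] [InnerProductSpace 𝕜 H]
    {K : Type*} [NormedAddCommGroup K] [NormedSpace 𝕜 K] [CompleteSpace K]
    {Λ : Type*} [MeasurableSpace Λ] {μ : Measure Λ} {p : ℝ≥0∞} [Fact (1 ≤ p)] (hp : 2 ≤ p)
    (T : H →L[𝕜] Lp K p μ) {ι : Type*} (e : HilbertBasis ι 𝕜 H)
    (hT : Summable fun i => ‖T (e i)‖ ^ 2) :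
    ∃ Tfib : Λ → (H →L[𝕜] K), ∀ v : H, ∀ᵐ l ∂μ, T v l = Tfib l v := by
  -- Null sets may be merged only over countably many indices; off `J` the terms `T (e i)` vanish.
  let J : Set ι := Function.support fun i => ‖T (e i)‖ ^ 2
  have : Countable J := hT.countable_support
  have he : Orthonormal 𝕜 fun i : J => e i := e.orthonormal.comp _ Subtype.val_injective
  have support_subset : (Function.support fun i => rankOne 𝕜 (T (e i)) (e i)) ⊆ J := by
    refine Function.support_subset_iff'.2 fun i hi => ?_
    have apply_eq_zero : T (e i) = 0 := by simpa [J] using hi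
    rw [apply_eq_zero, map_zero, zero_apply]
  have tsum_eq : ∑' i : J, rankOne 𝕜 (T (e i)) (e i) = T :=
    ((hasSum_subtype_iff_of_support_subset support_subset).2
      (hasSum_rankOne_of_summable_norm_sq e T hT)).tsum_eq
  refine ⟨fun l => ∑' i : J, rankOne 𝕜 (T (e i) l) (e i), fun v => ?_⟩
  simpa only [tsum_eq] using ae_tsum_rankOne_apply_eq hp he (hT.subtype J) v

/-- **Gelfand–Kostyuchenko theorem** (constant-fiber case, Theorem 1 of the paper):
every Hilbert–Schmidt operator `T : H → L²(Λ, μ; K)` is pointwise defined, i.e. there is a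
family of continuous linear maps `T_λ : H → K` with `(T v)(λ) = T_λ(v)` for a.e. `λ`. -/
theorem pointwiseDefined_of_hilbertSchmidt
    {H : Type*} [NormedAddCommGroup H] [InnerProductSpace ℂ H] [CompleteSpace H]
    [TopologicalSpace.SeparableSpace H]
    {K : Type*} [NormedAddCommGroup K] [InnerProductSpace ℂ K] [CompleteSpace K]
    [TopologicalSpace.SeparableSpace K]
    {Λ : Type*} [MeasurableSpace Λ] {μ : Measure Λ} [SigmaFinite μ]
    (T : H →L[ℂ] Lp K 2 μ)
    (hHS : ∃ (ι : Type) (e : HilbertBasis ι ℂ H), Summable fun i => ‖T (e i)‖ ^ 2) :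
    ∃ Tfib : Λ → (H →L[ℂ] K), ∀ v : H, ∀ᵐ l ∂μ, (T v : Λ → K) l = Tfib l v := by
  obtain ⟨ι, e, he⟩ := hHS
  exact pointwiseDefined_of_hilbertSchmidt_general le_rfl T e he
end
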